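/- arXiv:math-ph/0008007 — 3 statements merged into one kernel-verified Lean document; each statement's English description precedes it below -/
import Mathlib

section
/- The family of linear maps ((m,n) ↦ F^{(m,n)}) = ((m,n) ↦ (−iħ·a)^m ∘ (a†)^n), indexed by ℕ × ℕ, is linearly independent in End_ℂ(V). -/
open Complex MvPolynomial Finset

noncomputable section

/-- The standard basis vector `e n` of `V = ℕ →₀ ℂ`. -/
def e (n : ℕ) : ℕ →₀ ℂ := Finsupp.single n 1

/-- The destruction operator `a`: `a (e 0) = 0`, `a (e (n+1)) = √(n+1) • e n`. -/
def aop : (ℕ →₀ ℂ) →ₗ[ℂ] (ℕ →₀ ℂ) :=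
  Finsupp.lsum ℂ fun n => match n with
    | 0 => 0
    | k + 1 => ((Real.sqrt (k + 1) : ℝ) : ℂ) • Finsupp.lsingle k

/-- The creation operator `a†`: `a† (e n) = √(n+1) • e (n+1)`. -/
def adop : (ℕ →₀ ℂ) →ₗ[ℂ] (ℕ →₀ ℂ) :=
  Finsupp.lsum ℂ fun n => ((Real.sqrt (n + 1) : ℝ) : ℂ) • Finsupp.lsingle (n + 1)

/-- `F^{(m,n)} = (−iℏ·a)^m ∘ (a†)^n` as an element of `End_ℂ(V)`. -/
def F (ℏ : ℝ) (m n : ℕ) : Module.End ℂ (ℕ →₀ ℂ) :=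
  ((-(Complex.I * ℏ)) • (aop : Module.End ℂ (ℕ →₀ ℂ))) ^ m * (adop : Module.End ℂ (ℕ →₀ ℂ)) ^ n

theorem comm_pow_aux {R : Type*} [Ring R] [Algebra ℂ R] (A B : R) (μ : ℂ)
    (h : A * B = B * A + algebraMap ℂ R μ) (m : ℕ) :
    A ^ (m + 1) * B = B * A ^ (m + 1) + A ^ m * algebraMap ℂ R ((m + 1) * μ) := by
  induction m with
  | zero => simpa using h
  | succ m ih =>
    have hc : algebraMap ℂ R μ * A ^ (m + 1) = A ^ (m + 1) * algebraMap ℂ R μ :=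
      Algebra.commutes _ _
    rw [pow_succ' A (m + 1), mul_assoc, ih, mul_add, ← mul_assoc, h, add_mul, hc, ← mul_assoc,
      ← pow_succ', mul_assoc B, ← pow_succ', add_assoc, ← mul_add, ← map_add]
    congr 3
    push_cast
    ring

theorem indep_aux {R : Type*} [Ring R] [Algebra ℂ R] (A B : R) (μ : ℂ) (hμ : μ ≠ 0)
    (h : A * B = B * A + algebraMap ℂ R μ) (N : ℕ) :
    ∀ q : ℕ → R, (∀ m, q m * B = B * q m) → ∑ m ∈ range N, A ^ m * q m = 0 →
      ∀ m < N, q m = 0 := by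
  induction N with
  | zero => intro q _ _ m hm; omega
  | succ N ih =>
    intro q hq hs
    have key : ∀ m < N, algebraMap ℂ R ((m + 1) * μ) * q (m + 1) = 0 := by
      apply ih (fun m => algebraMap ℂ R ((m + 1) * μ) * q (m + 1))
      · intro m
        rw [mul_assoc, hq, ← mul_assoc, Algebra.commutes, mul_assoc]
      · have h1 : (∑ m ∈ range (N + 1), A ^ m * q m) * B
            - B * (∑ m ∈ range (N + 1), A ^ m * q m) = 0 := by rw [hs]; simp
        rw [← h1, Finset.sum_mul, Finset.mul_sum, ← Finset.sum_sub_distrib,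
          Finset.sum_range_succ']
        simp only [pow_zero, one_mul, hq 0, sub_self, add_zero]
        apply Finset.sum_congr rfl
        intro m _
        rw [mul_assoc _ _ B, hq, ← mul_assoc _ B, comm_pow_aux A B μ h m, add_mul _ _ (q (m + 1))]
        rw [← mul_assoc (A ^ m), ← mul_assoc B, add_sub_cancel_left]
    have hsucc : ∀ m < N, q (m + 1) = 0 := by
      intro m hm
      have h2 := key m hm
      rw [← Algebra.smul_def] at h2
      have h3 : ((m : ℂ) + 1) * μ ≠ 0 := mul_ne_zero (Nat.cast_add_one_ne_zero m) hμ
      have h4 := congrArg (fun x => (((m : ℂ) + 1) * μ)⁻¹ • x) h2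
      simpa only [smul_smul, inv_mul_cancel₀ h3, one_smul, smul_zero] using h4
    rw [Finset.sum_range_succ', Finset.sum_eq_zero] at hs
    · intro m hm
      cases m with
      | zero => simpa using hs
      | succ m => exact hsucc m (by omega)
    · intro m hm
      rw [hsucc m (by simpa using hm), mul_zero]

theorem ccr_aux : (aop : Module.End ℂ (ℕ →₀ ℂ)) * adop = adop * aop + 1 := by
  apply Finsupp.lhom_ext
  intro n b
  have hs : ∀ k : ℕ, ((Real.sqrt (k + 1) : ℝ) : ℂ) * ((Real.sqrt (k + 1) : ℝ) : ℂ) = k + 1 := by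
    intro k
    rw [← Complex.ofReal_mul, Real.mul_self_sqrt (by positivity)]
    push_cast; rfl
  have had : ∀ (k : ℕ) (c : ℂ), adop (Finsupp.single k c)
      = Finsupp.single (k + 1) (((Real.sqrt (k + 1) : ℝ) : ℂ) * c) := by
    intro k c; simp [adop]
  have ha : ∀ (k : ℕ) (c : ℂ), aop (Finsupp.single (k + 1) c)
      = Finsupp.single k (((Real.sqrt (k + 1) : ℝ) : ℂ) * c) := by
    intro k c; simp [aop]
  have ha0 : ∀ (c : ℂ), aop (Finsupp.single 0 c) = 0 := by
    intro c; simp [aop]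
  rw [Module.End.mul_apply, LinearMap.add_apply, Module.End.mul_apply, Module.End.one_apply]
  cases n with
  | zero => rw [had, ha, ha0, ← mul_assoc, hs]; simp
  | succ n =>
    rw [had, ha, ha, had, ← mul_assoc, ← mul_assoc, hs, hs, ← Finsupp.single_add]
    congr 1
    push_cast
    ring

theorem indep_gen {R : Type*} [Ring R] [Nontrivial R] [Algebra ℂ R] (A B : R) (μ : ℂ) (hμ : μ ≠ 0)
    (hAB : A * B = B * A + algebraMap ℂ R μ) :
    LinearIndependent ℂ (fun mn : ℕ × ℕ => A ^ mn.1 * B ^ mn.2) := by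
  have hBA : B * A = A * B + algebraMap ℂ R (-μ) := by
    rw [hAB, map_neg]; abel
  refine linearIndependent_iff'.mpr ?_
  intro s g hs
  obtain ⟨N, hN⟩ : ∃ N, s ⊆ range N ×ˢ range N := by
    refine ⟨s.sup (fun i => i.1 + i.2) + 1, fun i hi => ?_⟩
    have := Finset.le_sup (f := fun i : ℕ × ℕ => i.1 + i.2) hi
    simp only [Finset.mem_product, Finset.mem_range]
    omega
  classical
  let c : ℕ × ℕ → ℂ := fun i => if i ∈ s then g i else 0
  have h1 : ∑ i ∈ range N ×ˢ range N, c i • (A ^ i.1 * B ^ i.2) = 0 := by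
    rw [← hs]
    symm
    rw [← Finset.sum_subset hN]
    · apply Finset.sum_congr rfl
      intro i hi
      simp [c, hi]
    · intro i _ hi
      simp [c, hi]
  rw [Finset.sum_product] at h1
  have h2 : ∑ m ∈ range N, A ^ m * ∑ n ∈ range N, B ^ n * algebraMap ℂ R (c (m, n)) = 0 := by
    rw [← h1]
    apply Finset.sum_congr rfl
    intro m _
    rw [Finset.mul_sum]
    apply Finset.sum_congr rfl
    intro n _
    rw [← Algebra.commutes, ← Algebra.smul_def, mul_smul_comm]
  have h3 := indep_aux A B μ hμ hAB N _ (fun m => by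
    rw [Finset.sum_mul, Finset.mul_sum]
    apply Finset.sum_congr rfl
    intro n _
    rw [mul_assoc, Algebra.commutes, ← mul_assoc, ← mul_assoc, ← pow_succ, ← pow_succ']) h2
  intro i hi
  have hi2 := hN hi
  simp only [Finset.mem_product, Finset.mem_range] at hi2
  have h4 := indep_aux B A (-μ) (neg_ne_zero.mpr hμ) hBA N _
    (fun n => Algebra.commutes _ _) (h3 i.1 hi2.1) i.2 hi2.2
  have h5 := (map_eq_zero_iff _ (FaithfulSMul.algebraMap_injective ℂ R)).mp h4
  simpa [c, hi] using h5

/-- the family `(m,n) ↦ F^{(m,n)}` is linearly independent in `End_ℂ(V)`. -/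
theorem stmt2 (ℏ : ℝ) (hℏ : ℏ ≠ 0) :
    LinearIndependent ℂ (fun mn : ℕ × ℕ => F ℏ mn.1 mn.2) := by
  have hμ : -(Complex.I * ℏ) ≠ 0 := by simp [hℏ]
  refine indep_gen (R := Module.End ℂ (ℕ →₀ ℂ)) (-(Complex.I * ℏ) • aop) adop _ hμ ?_
  rw [smul_mul_assoc, ccr_aux, smul_add, mul_smul_comm, Algebra.algebraMap_eq_smul_one]

end
end

section
/- Let α : ℕ → ℂ be a sequence with α_0 = 1, let α̂ be the associated automorphism of ℂ[x,p], and define the generalized star product A ⋆_α B = α̂⁻¹((α̂ A) ⋆ (α̂ B)), where ⋆ is the Moyal product. Define g_α(m,n,s) = (i/2)^s · (m!·n!/((m−s)!·(n−s)!)) · Σ_{k=0}^s (2i)^k · α_k/(s−k)!, and define the linear map Φ_α : ℂ[x,p] → End_ℂ(V) on the monomial basis by Φ_α(p^m x^n) = Σ_{s=0}^{min(m,n)} g_α(m,n,s) · ħ^s · F^{(m−s,n−s)}. Then for all polynomials A, B ∈ ℂ[x,p]: Φ_α(A ⋆_α B) = Φ_α(A) ∘ Φ_α(B). -/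
open Complex MvPolynomial Finset

noncomputable section

/-- The polynomial algebra ℂ[x,p] in two commuting variables. -/
abbrev Pxp := MvPolynomial (Fin 2) ℂ

/-- The variable `x`. -/
def xv : Pxp := X 0
/-- The variable `p`. -/
def pv : Pxp := X 1

/-- The partial derivative `∂_x` as a linear endomorphism. -/
def Dx : Module.End ℂ Pxp := (pderiv (0 : Fin 2)).toLinearMap
/-- The partial derivative `∂_p` as a linear endomorphism. -/
def Dp : Module.End ℂ Pxp := (pderiv (1 : Fin 2)).toLinearMap

/-- The Moyal product
`A ⋆ B = Σ_k (1/k!)(iℏ/2)^k Σ_{j=0}^k (−1)^j C(k,j) (∂_x^{k−j}∂_p^j A)(∂_x^j ∂_p^{k−j} B)`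
(a finite sum for polynomials). -/
def moyal (ℏ : ℝ) (A B : Pxp) : Pxp :=
  ∑ k ∈ Finset.range (A.totalDegree + 1),
    ((1 / (k.factorial : ℂ)) * (Complex.I * ℏ / 2) ^ k) •
      ∑ j ∈ Finset.range (k + 1),
        ((-1 : ℂ) ^ j * (k.choose j : ℂ)) •
          (((Dx ^ (k - j) * Dp ^ j) A) * ((Dx ^ j * Dp ^ (k - j)) B))

/-- `g_α(m,n,s) = (i/2)^s (m!n!/((m−s)!(n−s)!)) Σ_{k=0}^s (2i)^k α_k/(s−k)!`. -/
def gα (α : ℕ → ℂ) (m n s : ℕ) : ℂ :=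
  (Complex.I / 2) ^ s *
    ((m.factorial * n.factorial : ℂ) / ((m - s).factorial * (n - s).factorial)) *
    ∑ k ∈ Finset.range (s + 1), (2 * Complex.I) ^ k * α k / ((s - k).factorial : ℂ)

section aux

lemma comm_DxDp : Commute Dx Dp := by
  apply LinearMap.ext
  intro A
  induction A using MvPolynomial.induction_on' with
  | monomial u a =>
    simp only [Dx, Dp, Module.End.mul_apply, Derivation.coeFn_coe, pderiv_monomial]
    simp
    rw [tsub_right_comm]
    congr 1
    ring
  | add p q hp hq => simp only [map_add, hp, hq]

lemma monomial_eq_px (u : Fin 2 →₀ ℕ) (a : ℂ) :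
    (monomial u a : Pxp) = a • (pv ^ (u 1) * xv ^ (u 0)) := by
  rw [MvPolynomial.monomial_eq, Finsupp.prod_fintype _ _ (by simp)]
  simp [Fin.prod_univ_two, pv, xv, MvPolynomial.smul_eq_C_mul, mul_comm]

lemma lin_ext {M : Type*} [AddCommMonoid M] [Module ℂ M] (f g : Pxp →ₗ[ℂ] M)
    (h : ∀ m n : ℕ, f (pv ^ m * xv ^ n) = g (pv ^ m * xv ^ n)) : f = g := by
  apply LinearMap.ext
  intro A
  induction A using MvPolynomial.induction_on' with
  | monomial u a => rw [monomial_eq_px, map_smul, map_smul, h]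
  | add p q hp hq => simp only [map_add, hp, hq]

lemma Dx_px (m n : ℕ) : Dx (pv ^ m * xv ^ n) = (n : ℂ) • (pv ^ m * xv ^ (n - 1)) := by
  simp [Dx, pv, xv, pderiv_X, MvPolynomial.smul_eq_C_mul]
  ring

lemma Dp_px (m n : ℕ) : Dp (pv ^ m * xv ^ n) = (m : ℂ) • (pv ^ (m - 1) * xv ^ n) := by
  simp [Dp, pv, xv, pderiv_X, MvPolynomial.smul_eq_C_mul]
  ring

lemma Dx_pow_px (a m n : ℕ) :
    (Dx ^ a) (pv ^ m * xv ^ n) = (n.descFactorial a : ℂ) • (pv ^ m * xv ^ (n - a)) := by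
  induction a with
  | zero => simp
  | succ a ih =>
    rw [pow_succ', Module.End.mul_apply, ih, map_smul, Dx_px, smul_smul, Nat.descFactorial_succ,
      Nat.sub_sub]
    push_cast
    rw [mul_comm]

lemma Dp_pow_px (a m n : ℕ) :
    (Dp ^ a) (pv ^ m * xv ^ n) = (m.descFactorial a : ℂ) • (pv ^ (m - a) * xv ^ n) := by
  induction a with
  | zero => simp
  | succ a ih =>
    rw [pow_succ', Module.End.mul_apply, ih, map_smul, Dp_px, smul_smul, Nat.descFactorial_succ,
      Nat.sub_sub]
    push_cast
    rw [mul_comm]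

lemma DD_px (a b m n : ℕ) :
    (Dx ^ a * Dp ^ b) (pv ^ m * xv ^ n) =
      ((m.descFactorial b : ℂ) * (n.descFactorial a : ℂ)) • (pv ^ (m - b) * xv ^ (n - a)) := by
  rw [Module.End.mul_apply, Dp_pow_px, map_smul, Dx_pow_px, smul_smul]

lemma DD_zero (a b : ℕ) (A : Pxp) (h : A.totalDegree < a + b) : (Dx ^ a * Dp ^ b) A = 0 := by
  rw [A.as_sum, map_sum]
  apply Finset.sum_eq_zero
  intro u hu
  have h1 := MvPolynomial.le_totalDegree hu
  rw [Finsupp.sum_fintype _ _ (by simp)] at h1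
  simp only [Fin.sum_univ_two] at h1
  rw [monomial_eq_px, map_smul, DD_px]
  have : (u 1).descFactorial b = 0 ∨ (u 0).descFactorial a = 0 := by
    simp only [Nat.descFactorial_eq_zero_iff_lt]; omega
  rcases this with h | h <;> simp [h]

lemma DDpow (k : ℕ) : (Dx * Dp) ^ k = Dx ^ k * Dp ^ k := comm_DxDp.mul_pow k

lemma DDpow_zero (k : ℕ) (A : Pxp) (h : A.totalDegree < k) : ((Dx * Dp) ^ k) A = 0 := by
  rw [DDpow]; exact DD_zero _ _ _ (by omega)

/-- truncated series in `∂x ∂p` -/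
def serN (b : ℕ → ℂ) (K : ℕ) : Module.End ℂ Pxp := ∑ k ∈ range K, b k • (Dx * Dp) ^ k

lemma serN_apply (b : ℕ → ℂ) (K : ℕ) (A : Pxp) :
    serN b K A = ∑ k ∈ range K, b k • ((Dx * Dp) ^ k) A := by
  simp [serN, LinearMap.sum_apply]

lemma serN_stable (b : ℕ → ℂ) (K L : ℕ) (A : Pxp) (hK : A.totalDegree < K) (hL : A.totalDegree < L) :
    serN b K A = serN b L A := by
  wlog h : K ≤ L generalizing K L
  · exact (this L K hL hK (by omega)).symm
  rw [serN_apply, serN_apply]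
  apply Finset.sum_subset (by simpa using h)
  intro k _ hk
  rw [DDpow_zero, smul_zero]
  simp at hk; omega

/-- series in `∂x ∂p` -/
def ser (b : ℕ → ℂ) : Module.End ℂ Pxp where
  toFun A := serN b (A.totalDegree + 1) A
  map_add' A B := by
    set K := A.totalDegree + B.totalDegree + 1
    have := totalDegree_add A B
    rw [serN_stable b (A.totalDegree + 1) K A (by omega) (by omega),
      serN_stable b (B.totalDegree + 1) K B (by omega) (by omega),
      serN_stable b _ K (A + B) (Nat.lt_succ_self _) (by omega), map_add]
  map_smul' c A := by
    have := totalDegree_smul_le c A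
    rw [serN_stable b _ (A.totalDegree + 1) (c • A) (Nat.lt_succ_self _) (by omega), map_smul]
    rfl

lemma ser_eq (b : ℕ → ℂ) (K : ℕ) (A : Pxp) (hK : A.totalDegree < K) : ser b A = serN b K A :=
  serN_stable b _ _ A (Nat.lt_succ_self _) hK

lemma td_px (m n : ℕ) : (pv ^ m * xv ^ n).totalDegree ≤ m + n := by
  refine (totalDegree_mul _ _).trans (add_le_add ?_ ?_)
  · simp [pv, totalDegree_X_pow]
  · simp [xv, totalDegree_X_pow]

lemma ser_px (b : ℕ → ℂ) (m n : ℕ) : ser b (pv ^ m * xv ^ n) =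
    ∑ k ∈ range (min m n + 1), (b k * (m.descFactorial k * n.descFactorial k)) •
      (pv ^ (m - k) * xv ^ (n - k)) := by
  rw [ser_eq b (m + n + 1) _ (Nat.lt_succ_of_le (td_px m n)), serN_apply]
  symm
  have : ∀ k, b k • ((Dx * Dp) ^ k) (pv ^ m * xv ^ n) =
    (b k * (m.descFactorial k * n.descFactorial k)) • (pv ^ (m - k) * xv ^ (n - k)) := by
    intro k; rw [DDpow, DD_px, smul_smul]
  simp only [this]
  apply Finset.sum_subset
  · intro k; simp; omega
  intro k _ hk
  have : m.descFactorial k = 0 ∨ n.descFactorial k = 0 := by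
    simp only [Nat.descFactorial_eq_zero_iff_lt]; simp at hk; omega
  rcases this with h | h <;> simp [h]

lemma ser_ser (b t : ℕ → ℂ) (A : Pxp) :
    ser b (ser t A) = ser (fun s => ∑ k ∈ range (s + 1), t k * b (s - k)) A := by
  set K := A.totalDegree + (ser t A).totalDegree + 1
  rw [ser_eq b K _ (by omega), ser_eq t K _ (by omega), ser_eq _ K _ (by omega)]
  simp only [serN_apply, map_sum, map_smul, Finset.smul_sum, Finset.sum_smul]
  have h1 := Finset.sum_range_diag_flip K
    (fun k j => (t k * b j) • ((Dx * Dp) ^ (k + j)) A)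
  have h2 : ∀ s ∈ range K, ∑ k ∈ range (s + 1), (t k * b (s - k)) • ((Dx * Dp) ^ (k + (s - k))) A
     = ∑ k ∈ range (s + 1), (t k * b (s - k)) • ((Dx * Dp) ^ s) A := by
    intro s _
    apply Finset.sum_congr rfl
    intro k hk
    simp at hk
    rw [Nat.add_sub_cancel' (by omega)]
  rw [Finset.sum_congr rfl h2] at h1
  rw [h1]
  apply Finset.sum_congr rfl
  intro k hk
  symm
  apply Finset.sum_subset_zero_on_sdiff
  · intro j; simp; omega
  · intro j hj
    simp at hj
    rw [smul_smul, ← Module.End.mul_apply, ← pow_add, DDpow_zero, smul_zero]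
    simp at hk; omega
  · intro j hj
    rw [smul_smul, ← Module.End.mul_apply, ← pow_add, add_comm j k]


/-- truncated Moyal double sum -/
def SS (c : ℂ) (N M : ℕ) (A B : Pxp) : Pxp :=
  ∑ r ∈ range N, ∑ j ∈ range M, (c ^ r / (r.factorial : ℂ) * ((-c) ^ j / (j.factorial : ℂ))) •
    ((Dx ^ r * Dp ^ j) A * (Dx ^ j * Dp ^ r) B)

lemma SS_stable1 (c : ℂ) (N M K : ℕ) (A B : Pxp) (hN : A.totalDegree < N) (hM : A.totalDegree < M)
    (hN' : N ≤ K) (hM' : M ≤ K) : SS c N M A B = SS c K K A B := by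
  unfold SS
  rw [← Finset.sum_product', ← Finset.sum_product']
  apply Finset.sum_subset
  · intro ⟨r, j⟩; simp; omega
  · intro ⟨r, j⟩ _ h
    have : (Dx ^ r * Dp ^ j) A = 0 := DD_zero _ _ _ (by simp at h; omega)
    simp [this]

lemma moyal_eq (ℏ : ℝ) (N M : ℕ) (A B : Pxp) (hN : A.totalDegree < N) (hM : A.totalDegree < M) :
    moyal ℏ A B = SS (Complex.I * ℏ / 2) N M A B := by
  rw [SS_stable1 _ N M (N + M) A B hN hM (by omega) (by omega),
    ← SS_stable1 _ (A.totalDegree + 1) (A.totalDegree + 1) (N + M) A B (by omega) (by omega)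
      (by omega) (by omega)]
  unfold moyal SS
  set c := Complex.I * (ℏ : ℂ) / 2
  have h1 := Finset.sum_range_diag_flip (A.totalDegree + 1)
    (fun j r => (c ^ r / (r.factorial : ℂ) * ((-c) ^ j / (j.factorial : ℂ))) •
    ((Dx ^ r * Dp ^ j) A * (Dx ^ j * Dp ^ r) B))
  rw [Finset.sum_comm]
  trans
  swap
  · trans
    · exact h1
    · apply Finset.sum_congr rfl
      intro j hj
      apply Finset.sum_subset_zero_on_sdiff
      · intro r; simp; omega
      · intro r hr
        have : (Dx ^ r * Dp ^ j) A = 0 := DD_zero _ _ _ (by simp at hr hj; omega)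
        simp [this]
      · intro r hr; rfl
  · apply Finset.sum_congr rfl
    intro k _
    rw [Finset.smul_sum]
    apply Finset.sum_congr rfl
    intro j hj
    have hjk : j ≤ k := by simp at hj; omega
    rw [smul_smul]
    congr 1
    rw [Nat.cast_choose ℂ hjk, neg_pow c j]
    have e1 : c ^ k = c ^ (k - j) * c ^ j := by rw [← pow_add, Nat.sub_add_cancel hjk]
    rw [e1]
    have := Nat.cast_ne_zero (R := ℂ).2 k.factorial_ne_zero
    field_simp

lemma Dx_mul (A B : Pxp) : Dx (A * B) = Dx A * B + A * Dx B := by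
  simp [Dx, Derivation.leibniz]; ring

lemma Dp_mul (A B : Pxp) : Dp (A * B) = Dp A * B + A * Dp B := by
  simp [Dp, Derivation.leibniz]; ring

lemma Dx_x : Dx xv = 1 := by simp [Dx, xv]
lemma Dp_p : Dp pv = 1 := by simp [Dp, pv]
lemma Dx_p : Dx pv = 0 := by simp [Dx, pv, pderiv_X]
lemma Dp_x : Dp xv = 0 := by simp [Dp, xv, pderiv_X]

lemma Dp_pow_x (j : ℕ) (A : Pxp) : (Dp ^ j) (xv * A) = xv * (Dp ^ j) A := by
  induction j with
  | zero => simp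
  | succ j ih => rw [pow_succ', Module.End.mul_apply, ih, Dp_mul, Dp_x]; simp

lemma Dx_pow_p (j : ℕ) (A : Pxp) : (Dx ^ j) (pv * A) = pv * (Dx ^ j) A := by
  induction j with
  | zero => simp
  | succ j ih => rw [pow_succ', Module.End.mul_apply, ih, Dx_mul, Dx_p]; simp

lemma Dx_pow_x (r : ℕ) (A : Pxp) :
    (Dx ^ (r + 1)) (xv * A) = xv * (Dx ^ (r + 1)) A + ((r : ℂ) + 1) • (Dx ^ r) A := by
  induction r with
  | zero => simp [Dx_mul, Dx_x, add_comm]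
  | succ r ih =>
    rw [pow_succ', Module.End.mul_apply, ih, map_add, Dx_mul, Dx_x, map_smul,
      ← Module.End.mul_apply, ← Module.End.mul_apply, ← pow_succ', ← pow_succ']
    push_cast
    rw [one_mul]
    module

lemma Dp_pow_p (r : ℕ) (A : Pxp) :
    (Dp ^ (r + 1)) (pv * A) = pv * (Dp ^ (r + 1)) A + ((r : ℂ) + 1) • (Dp ^ r) A := by
  induction r with
  | zero => simp [Dp_mul, Dp_p, add_comm]
  | succ r ih =>
    rw [pow_succ', Module.End.mul_apply, ih, map_add, Dp_mul, Dp_p, map_smul,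
      ← Module.End.mul_apply, ← Module.End.mul_apply, ← pow_succ', ← pow_succ']
    push_cast
    rw [one_mul]
    module

lemma fact_aux (c : ℂ) (r : ℕ) :
    c ^ (r + 1) / ((r + 1).factorial : ℂ) * ((r : ℂ) + 1) = c * (c ^ r / (r.factorial : ℂ)) := by
  have := Nat.cast_ne_zero (R := ℂ).2 r.factorial_ne_zero
  have h2 : (r : ℂ) + 1 ≠ 0 := by exact_mod_cast Nat.succ_ne_zero r
  rw [Nat.factorial_succ]
  push_cast
  field_simp
  ring

lemma SS_x (c : ℂ) (N M : ℕ) (A B : Pxp) :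
    SS c (N + 1) M (xv * A) B = xv * SS c (N + 1) M A B + c • SS c N M A (Dp B) := by
  unfold SS
  rw [Finset.sum_range_succ', Finset.sum_range_succ']
  simp only [Module.End.mul_apply, Dp_pow_x, Dx_pow_x, add_mul, smul_add, mul_add,
    Finset.sum_add_distrib, Finset.mul_sum, Finset.smul_sum]
  have : ∀ r j : ℕ, (c ^ (r + 1) / ((r + 1).factorial : ℂ) * ((-c) ^ j / (j.factorial : ℂ))) •
      ((((r : ℂ) + 1) • (Dx ^ r) ((Dp ^ j) A)) * (Dx ^ j) ((Dp ^ (r + 1)) B)) =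
      c • (c ^ r / (r.factorial : ℂ) * ((-c) ^ j / (j.factorial : ℂ))) •
      ((Dx ^ r) ((Dp ^ j) A) * (Dx ^ j) ((Dp ^ r) (Dp B))) := by
    intro r j
    rw [pow_succ Dp, Module.End.mul_apply, smul_mul_assoc, smul_smul, smul_smul]
    congr 1
    linear_combination ((-c) ^ j / (j.factorial : ℂ)) * fact_aux c r
  simp only [this, mul_smul_comm, mul_assoc]
  simp only [pow_zero, Module.End.one_apply, mul_assoc]
  abel

lemma SS_p (c : ℂ) (N M : ℕ) (A B : Pxp) :
    SS c N (M + 1) (pv * A) B = pv * SS c N (M + 1) A B - c • SS c N M A (Dx B) := by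
  unfold SS
  rw [Finset.mul_sum, Finset.smul_sum, ← Finset.sum_sub_distrib]
  apply Finset.sum_congr rfl
  intro r _
  rw [Finset.sum_range_succ', Finset.sum_range_succ']
  have hc : ∀ (j r : ℕ) (B : Pxp), (Dx ^ (j + 1)) ((Dp ^ r) B) = (Dx ^ j) ((Dp ^ r) (Dx B)) := by
    intro j r B
    rw [pow_succ, Module.End.mul_apply, ← Module.End.mul_apply Dx, ← Module.End.mul_apply _ Dx,
      (comm_DxDp.pow_right r).eq]
  simp only [Module.End.mul_apply, Dp_pow_p, map_add, map_smul, Dx_pow_p, add_mul, smul_add,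
    mul_add, Finset.sum_add_distrib, Finset.mul_sum, Finset.smul_sum]
  have : ∀ j : ℕ, (c ^ r / (r.factorial : ℂ) * ((-c) ^ (j + 1) / ((j + 1).factorial : ℂ))) •
      ((((j : ℂ) + 1) • (Dx ^ r) ((Dp ^ j) A)) * (Dx ^ (j + 1)) ((Dp ^ r) B)) =
      - (c • (c ^ r / (r.factorial : ℂ) * ((-c) ^ j / (j.factorial : ℂ))) •
      ((Dx ^ r) ((Dp ^ j) A) * (Dx ^ j) ((Dp ^ r) (Dx B)))) := by
    intro j
    rw [hc, smul_mul_assoc, smul_smul, smul_smul, ← neg_smul]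
    congr 1
    linear_combination (c ^ r / (r.factorial : ℂ)) * fact_aux (-c) j
  simp only [this, mul_smul_comm, mul_assoc, Finset.sum_neg_distrib]
  simp only [pow_zero, Module.End.one_apply, mul_assoc, Dx_pow_p]
  abel

lemma Dp_SS (c : ℂ) (N M : ℕ) (A B : Pxp) :
    Dp (SS c N M A B) = SS c N M (Dp A) B + SS c N M A (Dp B) := by
  have h : ∀ (a b : ℕ) (A : Pxp), Dp ((Dx ^ a * Dp ^ b) A) = (Dx ^ a * Dp ^ b) (Dp A) := by
    intro a b A
    rw [← Module.End.mul_apply, ← Module.End.mul_apply]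
    congr 1
    exact ((comm_DxDp.symm.pow_right a).mul_right ((Commute.refl Dp).pow_right b)).eq
  unfold SS
  simp only [map_sum, map_smul, Dp_mul, h, smul_add, Finset.sum_add_distrib]

lemma Dx_SS (c : ℂ) (N M : ℕ) (A B : Pxp) :
    Dx (SS c N M A B) = SS c N M (Dx A) B + SS c N M A (Dx B) := by
  have h : ∀ (a b : ℕ) (A : Pxp), Dx ((Dx ^ a * Dp ^ b) A) = (Dx ^ a * Dp ^ b) (Dx A) := by
    intro a b A
    rw [← Module.End.mul_apply, ← Module.End.mul_apply]
    congr 1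
    exact (((Commute.refl Dx).pow_right a).mul_right (comm_DxDp.pow_right b)).eq
  unfold SS
  simp only [map_sum, map_smul, Dx_mul, h, smul_add, Finset.sum_add_distrib]

lemma SS_add (c : ℂ) (N M : ℕ) (A A' B : Pxp) :
    SS c N M (A + A') B = SS c N M A B + SS c N M A' B := by
  unfold SS
  simp only [map_add, add_mul, smul_add, Finset.sum_add_distrib]

lemma SS_smul (c : ℂ) (N M : ℕ) (a : ℂ) (A B : Pxp) :
    SS c N M (a • A) B = a • SS c N M A B := by
  unfold SS
  simp only [map_smul, smul_mul_assoc, Finset.smul_sum]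
  simp only [smul_comm a]

/-- the Moyal product as a linear map in the left argument -/
def moyalL (ℏ : ℝ) (B : Pxp) : Pxp →ₗ[ℂ] Pxp where
  toFun A := moyal ℏ A B
  map_add' A A' := by
    set K := A.totalDegree + A'.totalDegree + 1
    have := totalDegree_add A A'
    rw [moyal_eq ℏ K K _ B (by omega) (by omega), moyal_eq ℏ K K A B (by omega) (by omega),
      moyal_eq ℏ K K A' B (by omega) (by omega), SS_add]
  map_smul' c A := by
    have := totalDegree_smul_le c A
    rw [moyal_eq ℏ (A.totalDegree + 1) (A.totalDegree + 1) _ B (by omega) (by omega),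
      moyal_eq ℏ (A.totalDegree + 1) (A.totalDegree + 1) A B (by omega) (by omega), SS_smul]
    rfl

lemma moyalL_x (ℏ : ℝ) (A B : Pxp) :
    moyalL ℏ B (xv * A + (Complex.I * ℏ / 2) • Dp A) =
      xv * moyalL ℏ B A + (Complex.I * ℏ / 2) • Dp (moyalL ℏ B A) := by
  rw [map_add, map_smul]
  set K := A.totalDegree + (xv * A).totalDegree + (Dp A).totalDegree + 1
  have e1 : moyalL ℏ B A = _ := moyal_eq ℏ (K + 1) K A B (by omega) (by omega)
  have e1' := moyal_eq ℏ K K A (Dp B) (by omega) (by omega)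
  have e1'' := moyal_eq ℏ (K + 1) K A (Dp B) (by omega) (by omega)
  have e2 : moyalL ℏ B (xv * A) = _ := moyal_eq ℏ (K + 1) K (xv * A) B (by omega) (by omega)
  have e3 : moyalL ℏ B (Dp A) = _ := moyal_eq ℏ (K + 1) K (Dp A) B (by omega) (by omega)
  rw [e1, e2, e3, SS_x, Dp_SS, ← e1', e1'']
  module

lemma moyalL_p (ℏ : ℝ) (A B : Pxp) :
    moyalL ℏ B (pv * A - (Complex.I * ℏ / 2) • Dx A) =
      pv * moyalL ℏ B A - (Complex.I * ℏ / 2) • Dx (moyalL ℏ B A) := by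
  rw [map_sub, map_smul]
  set K := A.totalDegree + (pv * A).totalDegree + (Dx A).totalDegree + 1
  have e1 : moyalL ℏ B A = _ := moyal_eq ℏ K (K + 1) A B (by omega) (by omega)
  have e1' := moyal_eq ℏ K K A (Dx B) (by omega) (by omega)
  have e1'' := moyal_eq ℏ K (K + 1) A (Dx B) (by omega) (by omega)
  have e2 : moyalL ℏ B (pv * A) = _ := moyal_eq ℏ K (K + 1) (pv * A) B (by omega) (by omega)
  have e3 : moyalL ℏ B (Dx A) = _ := moyal_eq ℏ K (K + 1) (Dx A) B (by omega) (by omega)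
  rw [e1, e2, e3, SS_p, Dx_SS, ← e1', e1'']
  module

lemma moyalL_one (ℏ : ℝ) (B : Pxp) : moyalL ℏ B 1 = B := by
  have : moyalL ℏ B 1 = _ := moyal_eq ℏ 1 1 1 B (by simp) (by simp)
  rw [this]; simp [SS]

lemma hom_of_gen (ℏ : ℝ) (Q : Pxp →ₗ[ℂ] Module.End ℂ (ℕ →₀ ℂ)) (X P : Module.End ℂ (ℕ →₀ ℂ))
    (h1 : Q 1 = 1)
    (hx : ∀ B, Q (xv * B + (Complex.I * ℏ / 2) • Dp B) = X * Q B)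
    (hp : ∀ B, Q (pv * B - (Complex.I * ℏ / 2) • Dx B) = P * Q B) (A B : Pxp) :
    Q (moyal ℏ A B) = Q A * Q B := by
  set c := Complex.I * (ℏ : ℂ) / 2 with hc
  suffices h : Q.comp (moyalL ℏ B) = (LinearMap.mulRight ℂ (Q B)).comp Q from
    LinearMap.congr_fun h A
  apply lin_ext
  intro m
  simp only [LinearMap.comp_apply, LinearMap.mulRight_apply]
  have hx' : ∀ A, Q (moyalL ℏ B A) = Q A * Q B →
      Q (moyalL ℏ B (xv * A + c • Dp A)) = Q (xv * A + c • Dp A) * Q B := by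
    intro A hA
    rw [moyalL_x, hx, hx, hA, mul_assoc]
  have hp' : ∀ A, Q (moyalL ℏ B A) = Q A * Q B →
      Q (moyalL ℏ B (pv * A - c • Dx A)) = Q (pv * A - c • Dx A) * Q B := by
    intro A hA
    rw [moyalL_p, hp, hp, hA, mul_assoc]
  induction m with
  | zero =>
    intro n
    induction n with
    | zero => simp [moyalL_one, h1]
    | succ n ih =>
      have := hx' _ ih
      rw [Dp_px] at this
      simpa [pow_succ', mul_comm] using this
  | succ m ih =>
    intro n
    have h2 := hp' _ (ih n)
    have h3 := ih (n - 1)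
    rw [Dx_px] at h2
    have e0 : pv ^ (m + 1) * xv ^ n = (pv * (pv ^ m * xv ^ n) -
        c • (n : ℂ) • (pv ^ m * xv ^ (n - 1))) + (c * n) • (pv ^ m * xv ^ (n - 1)) := by
      rw [mul_smul, sub_add_cancel]; ring
    rw [e0]
    generalize pv * (pv ^ m * xv ^ n) - c • (n : ℂ) • (pv ^ m * xv ^ (n - 1)) = Y at h2 ⊢
    rw [map_add, map_add, map_add, map_smul, map_smul, map_smul, h2, h3, add_mul, smul_mul_assoc]

lemma aop_e0 : aop (Finsupp.single 0 1) = 0 := by simp [aop]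
lemma aop_e (n : ℕ) : aop (Finsupp.single (n + 1) 1) =
    ((Real.sqrt (n + 1) : ℝ) : ℂ) • Finsupp.single n 1 := by simp [aop]
lemma adop_e (n : ℕ) : adop (Finsupp.single n 1) =
    ((Real.sqrt (n + 1) : ℝ) : ℂ) • Finsupp.single (n + 1) 1 := by simp [adop]

lemma sqrt_sq_c (n : ℕ) : ((Real.sqrt (n + 1) : ℝ) : ℂ) * ((Real.sqrt (n + 1) : ℝ) : ℂ) = n + 1 := by
  rw [← Complex.ofReal_mul, Real.mul_self_sqrt (by positivity)]
  push_cast; rfl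

lemma ccr : (aop * adop : Module.End ℂ (ℕ →₀ ℂ)) = adop * aop + 1 := by
  apply Finsupp.lhom_ext'
  intro n
  apply LinearMap.ext_ring
  simp only [LinearMap.comp_apply, Finsupp.lsingle_apply, Module.End.mul_apply, LinearMap.add_apply,
    Module.End.one_apply]
  cases n with
  | zero => rw [adop_e, map_smul, aop_e, aop_e0, smul_smul, sqrt_sq_c]; simp
  | succ n =>
    rw [adop_e, map_smul, aop_e, aop_e, map_smul, adop_e, smul_smul, smul_smul, sqrt_sq_c,
      sqrt_sq_c]
    push_cast
    module

/-- the momentum operator -/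
def Pop (ℏ : ℝ) : Module.End ℂ (ℕ →₀ ℂ) := (-(Complex.I * ℏ)) • (aop : Module.End ℂ (ℕ →₀ ℂ))
/-- the position operator -/
def Xop : Module.End ℂ (ℕ →₀ ℂ) := adop

lemma F_eq (ℏ : ℝ) (m n : ℕ) : F ℏ m n = Pop ℏ ^ m * Xop ^ n := rfl

lemma ccr' (ℏ : ℝ) : Xop * Pop ℏ = Pop ℏ * Xop + (Complex.I * ℏ) • 1 := by
  unfold Xop Pop
  rw [mul_smul_comm, smul_mul_assoc, ccr]
  module

lemma ccr_pow (ℏ : ℝ) (m : ℕ) : Xop * Pop ℏ ^ m =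
    Pop ℏ ^ m * Xop + (m * (Complex.I * ℏ)) • Pop ℏ ^ (m - 1) := by
  induction m with
  | zero => simp
  | succ m ih =>
    have e1 : Xop * Pop ℏ ^ (m + 1) = (Xop * Pop ℏ ^ m) * Pop ℏ := by rw [pow_succ, mul_assoc]
    have e2 : (m * (Complex.I * ℏ)) • Pop ℏ ^ (m - 1) * Pop ℏ = (m * (Complex.I * ℏ)) • Pop ℏ ^ m := by
      rcases m with _ | m
      · simp
      · rw [Nat.add_sub_cancel, smul_mul_assoc, ← pow_succ]
    have e3 : Pop ℏ ^ m * Xop * Pop ℏ = Pop ℏ ^ (m + 1) * Xop + (Complex.I * ℏ) • Pop ℏ ^ m := by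
      rw [mul_assoc, ccr', mul_add, mul_smul_comm, mul_one, ← mul_assoc, ← pow_succ]
    rw [e1, ih, add_mul, e2, e3, Nat.add_sub_cancel]
    push_cast
    module

/-- normal ordering -/
def NN (ℏ : ℝ) : Pxp →ₗ[ℂ] Module.End ℂ (ℕ →₀ ℂ) :=
  (MvPolynomial.basisMonomials (Fin 2) ℂ).constr ℂ (fun u => F ℏ (u 1) (u 0))

lemma NN_px (ℏ : ℝ) (m n : ℕ) : NN ℏ (pv ^ m * xv ^ n) = F ℏ m n := by
  have h := monomial_eq_px (Finsupp.single 1 m + Finsupp.single 0 n) 1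
  simp only [Finsupp.add_apply, one_smul] at h
  simp at h
  rw [← h]
  have := (MvPolynomial.basisMonomials (Fin 2) ℂ).constr_basis ℂ
    (fun u => F ℏ (u 1) (u 0)) (Finsupp.single 1 m + Finsupp.single 0 n)
  rw [MvPolynomial.coe_basisMonomials] at this
  simpa [NN] using this

lemma NN_p (ℏ : ℝ) (A : Pxp) : NN ℏ (pv * A) = Pop ℏ * NN ℏ A := by
  suffices h : (NN ℏ).comp (LinearMap.mulLeft ℂ pv) = (LinearMap.mulLeft ℂ (Pop ℏ)).comp (NN ℏ) from
    LinearMap.congr_fun h A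
  apply lin_ext
  intro m n
  simp only [LinearMap.comp_apply, LinearMap.mulLeft_apply]
  rw [← mul_assoc, ← pow_succ', NN_px, NN_px, F_eq, F_eq, pow_succ', mul_assoc]

lemma NN_x (ℏ : ℝ) (A : Pxp) : NN ℏ (xv * A + (Complex.I * ℏ) • Dp A) = Xop * NN ℏ A := by
  suffices h : (NN ℏ).comp (LinearMap.mulLeft ℂ xv + (Complex.I * ℏ) • Dp) =
      (LinearMap.mulLeft ℂ Xop).comp (NN ℏ) from
    LinearMap.congr_fun h A
  apply lin_ext
  intro m n
  simp only [LinearMap.comp_apply, LinearMap.mulLeft_apply, LinearMap.add_apply,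
    LinearMap.smul_apply, Dp_px]
  have : xv * (pv ^ m * xv ^ n) = pv ^ m * xv ^ (n + 1) := by ring
  rw [this, map_add, map_smul, map_smul, NN_px, NN_px, NN_px, F_eq, F_eq, F_eq, ← mul_assoc,
    ccr_pow, add_mul, smul_mul_assoc, smul_smul, pow_succ' Xop, ← mul_assoc, mul_comm (m : ℂ) (Complex.I * ℏ)]

/-- exponential coefficients -/
def ec (c : ℂ) (k : ℕ) : ℂ := c ^ k / (k.factorial : ℂ)

lemma ser_Dp (b : ℕ → ℂ) (A : Pxp) : ser b (Dp A) = Dp (ser b A) := by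
  set K := A.totalDegree + (Dp A).totalDegree + 1
  rw [ser_eq b K _ (by omega), ser_eq b K _ (by omega), serN_apply, serN_apply, map_sum]
  apply Finset.sum_congr rfl
  intro k _
  rw [map_smul, ← Module.End.mul_apply, ← Module.End.mul_apply]
  congr 2
  exact ((comm_DxDp.mul_left (Commute.refl Dp)).pow_left k).eq

lemma ser_Dx (b : ℕ → ℂ) (A : Pxp) : ser b (Dx A) = Dx (ser b A) := by
  set K := A.totalDegree + (Dx A).totalDegree + 1
  rw [ser_eq b K _ (by omega), ser_eq b K _ (by omega), serN_apply, serN_apply, map_sum]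
  apply Finset.sum_congr rfl
  intro k _
  rw [map_smul, ← Module.End.mul_apply, ← Module.End.mul_apply]
  congr 2
  exact (((Commute.refl Dx).mul_left comm_DxDp.symm).pow_left k).eq

lemma ser_x (c : ℂ) (A : Pxp) :
    ser (ec c) (xv * A) = xv * ser (ec c) A + c • Dp (ser (ec c) A) := by
  set K := A.totalDegree + (xv * A).totalDegree + 1
  rw [← ser_Dp]
  have hD := ser_eq (ec c) (K + (Dp A).totalDegree) (Dp A) (by omega)
  rw [hD, ser_eq _ (K + (Dp A).totalDegree + 1) _ (by omega),
    ser_eq _ (K + (Dp A).totalDegree + 1) A (by omega), serN_apply, serN_apply, serN_apply,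
    Finset.sum_range_succ', Finset.sum_range_succ', mul_add, Finset.mul_sum, Finset.smul_sum,
    add_right_comm (Finset.sum _ _), ← Finset.sum_add_distrib]
  congr 1
  · apply Finset.sum_congr rfl
    intro k _
    rw [DDpow, DDpow, Module.End.mul_apply, Dp_pow_x, Dx_pow_x, smul_add, smul_smul, ec, ec,
      fact_aux, mul_smul, mul_smul_comm, Module.End.mul_apply, Module.End.mul_apply, pow_succ Dp,
      Module.End.mul_apply]
  · simp

lemma ser_p (c : ℂ) (A : Pxp) :
    ser (ec c) (pv * A) = pv * ser (ec c) A + c • Dx (ser (ec c) A) := by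
  set K := A.totalDegree + (pv * A).totalDegree + 1
  rw [← ser_Dx]
  have hD := ser_eq (ec c) (K + (Dx A).totalDegree) (Dx A) (by omega)
  rw [hD, ser_eq _ (K + (Dx A).totalDegree + 1) _ (by omega),
    ser_eq _ (K + (Dx A).totalDegree + 1) A (by omega), serN_apply, serN_apply, serN_apply,
    Finset.sum_range_succ', Finset.sum_range_succ', mul_add, Finset.mul_sum, Finset.smul_sum,
    add_right_comm (Finset.sum _ _), ← Finset.sum_add_distrib]
  have hc : ∀ k, (Dx * Dp) ^ k = Dp ^ k * Dx ^ k := by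
    intro k; rw [DDpow, (comm_DxDp.pow_pow k k).eq]
  congr 1
  · apply Finset.sum_congr rfl
    intro k _
    rw [hc, hc, Module.End.mul_apply, Dx_pow_p, Dp_pow_p, smul_add, smul_smul, ec, ec,
      fact_aux, mul_smul, mul_smul_comm, Module.End.mul_apply, Module.End.mul_apply, pow_succ Dx,
      Module.End.mul_apply]
  · simp

/-- Weyl quantization -/
def QQ (ℏ : ℝ) : Pxp →ₗ[ℂ] Module.End ℂ (ℕ →₀ ℂ) := (NN ℏ).comp (ser (ec (Complex.I * ℏ / 2)))

lemma QQ_hom (ℏ : ℝ) (A B : Pxp) : QQ ℏ (moyal ℏ A B) = QQ ℏ A * QQ ℏ B := by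
  apply hom_of_gen ℏ (QQ ℏ) Xop (Pop ℏ)
  · have h1 := ser_px (ec (Complex.I * ℏ / 2)) 0 0
    have h2 := NN_px ℏ 0 0
    simp [ec] at h1
    simp [F] at h2
    simp only [QQ, LinearMap.comp_apply, h1, h2]
  · intro B
    simp only [QQ, LinearMap.comp_apply]
    rw [map_add, map_smul, ser_x, ser_Dp, ← NN_x]
    congr 1
    module
  · intro B
    simp only [QQ, LinearMap.comp_apply]
    rw [map_sub, map_smul, ser_p, ser_Dx, ← NN_p]
    congr 1
    module

lemma coef_eq (ℏ : ℝ) (α : ℕ → ℂ) (m n s : ℕ) (hm : s ≤ m) (hn : s ≤ n) :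
    gα α m n s * (ℏ : ℂ) ^ s =
    (∑ k ∈ range (s + 1), (α k * (-(ℏ : ℂ)) ^ k) * ec (Complex.I * ℏ / 2) (s - k)) *
      (m.descFactorial s * n.descFactorial s) := by
  have hd : ∀ m : ℕ, s ≤ m → (m.descFactorial s : ℂ) = m.factorial / (m - s).factorial := by
    intro m hm
    rw [eq_div_iff (Nat.cast_ne_zero.2 (Nat.factorial_ne_zero _)), mul_comm]
    exact_mod_cast Nat.factorial_mul_descFactorial hm
  rw [hd m hm, hd n hn, gα, Finset.mul_sum, Finset.sum_mul, Finset.sum_mul]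
  apply Finset.sum_congr rfl
  intro k hk
  have hks : k ≤ s := by simp at hk; omega
  obtain ⟨j, rfl⟩ := Nat.exists_eq_add_of_le hks
  rw [Nat.add_sub_cancel_left, ec]
  have hI : (Complex.I / 2) ^ k * (2 * Complex.I) ^ k = (-1) ^ k := by
    rw [← mul_pow]
    congr 1
    linear_combination Complex.I_mul_I
  have e3 : (Complex.I * ℏ / 2) ^ j = (Complex.I / 2) ^ j * (ℏ : ℂ) ^ j := by
    rw [← mul_pow]; congr 1; ring
  rw [e3, neg_pow (ℏ : ℂ), ← hI]
  ring

end aux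

/-- with `α̂` the automorphism attached to `α`, the generalized star product
`A ⋆_α B = α̂⁻¹((α̂ A) ⋆ (α̂ B))`, and `Φ_α(p^m x^n) = Σ_s g_α(m,n,s) ℏ^s F^{(m−s,n−s)}`,
one has `Φ_α(A ⋆_α B) = Φ_α(A) ∘ Φ_α(B)`. -/
theorem stmt4 (ℏ : ℝ) (hℏ : ℏ ≠ 0) (α : ℕ → ℂ) (hα : α 0 = 1)
    (T : Pxp ≃ₗ[ℂ] Pxp)
    (hT : ∀ A : Pxp, T A = ∑ k ∈ Finset.range (A.totalDegree + 1),
      (α k * (-(ℏ : ℂ)) ^ k) • (((Dx * Dp) ^ k) A))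
    (Φ : Pxp →ₗ[ℂ] Module.End ℂ (ℕ →₀ ℂ))
    (hΦ : ∀ m n : ℕ, Φ (pv ^ m * xv ^ n) =
      ∑ s ∈ Finset.range (min m n + 1), (gα α m n s * (ℏ : ℂ) ^ s) • F ℏ (m - s) (n - s)) :
    ∀ A B : Pxp, Φ (T.symm (moyal ℏ (T A) (T B))) = Φ A * Φ B := by
  have hTs : ∀ A, T A = ser (fun k => α k * (-(ℏ : ℂ)) ^ k) A := by
    intro A
    rw [hT, ser_eq _ (A.totalDegree + 1) A (Nat.lt_succ_self _), serN_apply]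
  have key : ∀ A, Φ A = QQ ℏ (T A) := by
    intro A
    suffices h : Φ = (QQ ℏ).comp T.toLinearMap from LinearMap.congr_fun h A
    apply lin_ext
    intro m n
    simp only [LinearMap.comp_apply, LinearEquiv.coe_coe, QQ]
    rw [hΦ, hTs, ser_ser, ser_px, map_sum]
    apply Finset.sum_congr rfl
    intro s hs
    have hs' : s ≤ min m n := by simp only [Finset.mem_range] at hs; omega
    rw [map_smul, NN_px, coef_eq ℏ α m n s (by omega) (by omega)]
  intro A B
  rw [key, key, key, LinearEquiv.apply_symm_apply, QQ_hom]

end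
end

section
/- For all m, n ∈ ℕ, the symmetric (Rivier) ordering identity holds in End_ℂ(V): (1/2)·((−iħ·a)^m ∘ (a†)^n + (a†)^n ∘ (−iħ·a)^m) = F^{(m,n)} + Σ_{s=1}^{min(m,n)} ((iħ)^s · m!·n!/(2·s!·(m−s)!·(n−s)!)) · F^{(m−s,n−s)}. -/
open Complex MvPolynomial Finset

noncomputable section

theorem comm_ops : (adop : Module.End ℂ (ℕ →₀ ℂ)) * aop = aop * adop - 1 := by
  apply Finsupp.lhom_ext'
  intro n
  apply LinearMap.ext_ring
  have key : ∀ k : ℕ, ((Real.sqrt (k + 1) : ℝ) : ℂ) * ((Real.sqrt (k + 1) : ℝ) : ℂ) = (k : ℂ) + 1 := by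
    intro k
    rw [← Complex.ofReal_mul, Real.mul_self_sqrt (by positivity)]
    push_cast; rfl
  have ha : ∀ (k : ℕ) (z : ℂ), aop (Finsupp.single (k + 1) z)
      = Finsupp.single k (((Real.sqrt (k + 1) : ℝ) : ℂ) * z) := by
    intro k z; simp [aop]
  have ha0 : ∀ (z : ℂ), aop (Finsupp.single 0 z) = 0 := by
    intro z; simp [aop]
  have hd : ∀ (k : ℕ) (z : ℂ), adop (Finsupp.single k z)
      = Finsupp.single (k + 1) (((Real.sqrt (k + 1) : ℝ) : ℂ) * z) := by
    intro k z; simp [adop]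
  cases n with
  | zero =>
    simp only [LinearMap.comp_apply, Finsupp.lsingle_apply, Module.End.mul_apply,
      LinearMap.sub_apply, Module.End.one_apply, ha0, hd, ha, map_zero, ← mul_assoc, key]
    simp
  | succ k =>
    simp only [LinearMap.comp_apply, Finsupp.lsingle_apply, Module.End.mul_apply,
      LinearMap.sub_apply, Module.End.one_apply, hd, ha, ← mul_assoc, key, ← Finsupp.single_sub]
    congr 1
    push_cast
    ring

theorem comm_pow {R : Type*} [Ring R] [Algebra ℂ R] (A B : R) (d : ℂ)
    (h : B * A = A * B + d • 1) (m : ℕ) :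
    B * A ^ m - A ^ m * B = ((m : ℂ) * d) • A ^ (m - 1) := by
  induction m with
  | zero => simp
  | succ k ih =>
    have e1 : B * A ^ (k + 1) - A ^ (k + 1) * B
        = (B * A ^ k - A ^ k * B) * A + A ^ k * (B * A - A * B) := by
      rw [pow_succ]; noncomm_ring
    rw [e1, ih, h, add_sub_cancel_left, smul_mul_assoc, mul_smul_comm, mul_one]
    cases k with
    | zero => simp
    | succ j =>
      simp only [Nat.add_sub_cancel, ← pow_succ, ← add_smul]
      congr 1
      push_cast; ring

theorem normal_order {R : Type*} [Ring R] [Algebra ℂ R] (A B : R) (d : ℂ)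
    (h : B * A = A * B + d • 1) (m n : ℕ) :
    B ^ n * A ^ m = ∑ s ∈ Finset.range (n + 1),
      (d ^ s * (m.descFactorial s : ℂ) * (n.choose s : ℂ)) • (A ^ (m - s) * B ^ (n - s)) := by
  set L : Module.End ℂ R := LinearMap.mulLeft ℂ B
  set Q : Module.End ℂ R := LinearMap.mulRight ℂ B
  have hLQ : Commute L Q := by
    ext x; simp [L, Q, mul_assoc]
  have hc : Commute (L - Q) Q := hLQ.sub_left (Commute.refl Q)
  have hQ : ∀ (k : ℕ) (x : R), (Q ^ k) x = x * B ^ k := by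
    intro k x; simp [Q, LinearMap.pow_mulRight]
  have hL : ∀ (k : ℕ) (x : R), (L ^ k) x = B ^ k * x := by
    intro k x; simp [L, LinearMap.pow_mulLeft]
  have had : ∀ s : ℕ, ((L - Q) ^ s) (A ^ m)
      = (d ^ s * (m.descFactorial s : ℂ)) • A ^ (m - s) := by
    intro s
    induction s with
    | zero => simp
    | succ k ih =>
      rw [pow_succ', Module.End.mul_apply, ih, map_smul]
      have := comm_pow A B d h (m - k)
      simp only [LinearMap.sub_apply, L, Q, LinearMap.mulLeft_apply, LinearMap.mulRight_apply]
      rw [this, smul_smul, Nat.descFactorial_succ, Nat.sub_sub]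
      congr 1
      push_cast; ring
  rw [← hL, show L = (L - Q) + Q by abel, hc.add_pow, LinearMap.sum_apply]
  refine Finset.sum_congr rfl fun s _ => ?_
  rw [(hc.pow_pow s (n - s)).eq, ← nsmul_eq_mul', LinearMap.smul_apply, Module.End.mul_apply,
    had, hQ, smul_mul_assoc, ← Nat.cast_smul_eq_nsmul ℂ, smul_smul]
  congr 1
  ring

theorem main_gen {R : Type*} [Ring R] [Algebra ℂ R] (A B : R) (h : B * A = A * B - 1)
    (ℏ : ℝ) (m n : ℕ) :
    (1 / 2 : ℂ) • (((-(Complex.I * ℏ)) • A) ^ m * B ^ n + B ^ n * ((-(Complex.I * ℏ)) • A) ^ m) =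
      ((-(Complex.I * ℏ)) • A) ^ m * B ^ n +
        ∑ s ∈ Finset.Icc 1 (min m n),
          ((Complex.I * ℏ) ^ s * (m.factorial * n.factorial : ℂ) /
            (2 * s.factorial * (m - s).factorial * (n - s).factorial)) •
            (((-(Complex.I * ℏ)) • A) ^ (m - s) * B ^ (n - s)) := by
  have hcomm : B * ((-(Complex.I * ℏ)) • A)
      = ((-(Complex.I * ℏ)) • A) * B + (Complex.I * ℏ) • (1 : R) := by
    rw [mul_smul_comm, smul_mul_assoc, h, smul_sub, neg_smul, neg_smul, sub_neg_eq_add]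
  have hno := normal_order _ _ _ hcomm m n
  rw [hno, Finset.sum_range_succ', smul_add, smul_add]
  have hs : ∑ s ∈ Finset.Icc 1 (min m n),
          ((Complex.I * ℏ) ^ s * (m.factorial * n.factorial : ℂ) /
            (2 * s.factorial * (m - s).factorial * (n - s).factorial)) •
            (((-(Complex.I * ℏ)) • A) ^ (m - s) * B ^ (n - s)) = ∑ s ∈ Finset.Icc 1 n, (1 / 2 : ℂ) •
          (((Complex.I * ℏ) ^ s * (m.descFactorial s : ℂ) * (n.choose s : ℂ)) •
            (((-(Complex.I * ℏ)) • A) ^ (m - s) * B ^ (n - s))) := by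
    rw [← Finset.sum_subset (Finset.Icc_subset_Icc_right (min_le_right m n))]
    · refine Finset.sum_congr rfl fun s hs => ?_
      obtain ⟨h1, h2⟩ := Finset.mem_Icc.1 hs
      have hm : s ≤ m := h2.trans (min_le_left _ _)
      have hn : s ≤ n := h2.trans (min_le_right _ _)
      rw [smul_smul]
      congr 1
      rw [Nat.cast_choose ℂ hn, ← Nat.factorial_mul_descFactorial hm]
      have a1 : ((m - s).factorial : ℂ) ≠ 0 := Nat.cast_ne_zero.2 (Nat.factorial_ne_zero _)
      have a2 : ((n - s).factorial : ℂ) ≠ 0 := Nat.cast_ne_zero.2 (Nat.factorial_ne_zero _)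
      have a3 : (s.factorial : ℂ) ≠ 0 := Nat.cast_ne_zero.2 (Nat.factorial_ne_zero _)
      push_cast
      field_simp
    · intro s h1 h2
      have : m < s := by
        simp only [Finset.mem_Icc, le_min_iff] at h1 h2
        omega
      simp [Nat.descFactorial_eq_zero_iff_lt.2 this]
  rw [hs, ← Finset.smul_sum, ← Finset.Ico_add_one_right_eq_Icc, Finset.sum_Ico_eq_sum_range]
  simp only [Nat.add_sub_cancel, Nat.add_comm 1]
  simp only [pow_zero, Nat.descFactorial_zero, Nat.choose_zero_right, Nat.cast_one, mul_one,
    one_smul, Nat.sub_zero, smul_add]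
  module

/-- the symmetric (Rivier) ordering identity
`½((−iℏa)^m (a†)^n + (a†)^n (−iℏa)^m)
  = F^{(m,n)} + Σ_{s=1}^{min(m,n)} ((iℏ)^s m!n!/(2 s!(m−s)!(n−s)!)) F^{(m−s,n−s)}`. -/
theorem stmt12 (ℏ : ℝ) (hℏ : ℏ ≠ 0) (m n : ℕ) :
    (1 / 2 : ℂ) •
        (((-(Complex.I * ℏ)) • (aop : Module.End ℂ (ℕ →₀ ℂ))) ^ m *
            (adop : Module.End ℂ (ℕ →₀ ℂ)) ^ n +
          (adop : Module.End ℂ (ℕ →₀ ℂ)) ^ n *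
            ((-(Complex.I * ℏ)) • (aop : Module.End ℂ (ℕ →₀ ℂ))) ^ m) =
      F ℏ m n +
        ∑ s ∈ Finset.Icc 1 (min m n),
          ((Complex.I * ℏ) ^ s * (m.factorial * n.factorial : ℂ) /
            (2 * s.factorial * (m - s).factorial * (n - s).factorial)) •
            F ℏ (m - s) (n - s) := by
  exact main_gen (R := Module.End ℂ (ℕ →₀ ℂ)) aop adop comm_ops ℏ m n

end
end
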